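/- Let W ⊆ GL(n, ℂ) be a finite subgroup generated by pseudo-reflections (elements of finite order whose fixed subspace has dimension n − 1), acting on the polynomial ring ℂ[x₁,…,x_n] by linear substitution of variables, (w·p)(v) = p(w⁻¹v). Then there exist n algebraically independent homogeneous polynomials σ₁,…,σ_n ∈ ℂ[x₁,…,x_n] such that the invariant ring ℂ[x₁,…,x_n]^W is exactly the ℂ-subalgebra generated by σ₁,…,σ_n. (This is the structure R• = (Sym• 𝔱*)^W ≅ ℂ[σ₁,…,σ_l] of the ring of Weyl-group invariants underlying the Hitchin base B = ⊕ᵢ H⁰(Sym^{dᵢ} K).) -/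

import Mathlib

/-!
STATEMENT 10 (Chevalley–Shephard–Todd, existence of basic invariants): If
W ⊆ GL(n, ℂ) is a finite subgroup generated by pseudo-reflections, acting on
ℂ[x₁,…,x_n] by (w·p)(v) = p(w⁻¹ v), then there are n algebraically independent
homogeneous polynomials σ₁,…,σ_n with ℂ[x₁,…,x_n]^W = ℂ[σ₁,…,σ_n].
-/

open Module

/-- The action of `g ∈ GL(n, ℂ)` on polynomials by linear substitution of variables:
`(g · p)(v) = p(g⁻¹ v)`, i.e. `x_i ↦ ∑_j (g⁻¹)_{ij} x_j`. -/
noncomputable def polySubst (n : ℕ) (g : GL (Fin n) ℂ)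
    (p : MvPolynomial (Fin n) ℂ) : MvPolynomial (Fin n) ℂ :=
  MvPolynomial.aeval
    (fun i => ∑ j, MvPolynomial.C (((g⁻¹ : GL (Fin n) ℂ) : Matrix (Fin n) (Fin n) ℂ) i j)
      * MvPolynomial.X j) p

/-- A pseudo-reflection: an element of `GL(n, ℂ)` of finite order whose fixed
subspace `{v : g v = v}` has dimension `n − 1`. -/
noncomputable def IsPseudoReflection (n : ℕ) (g : GL (Fin n) ℂ) : Prop :=
  IsOfFinOrder g ∧
  finrank ℂ (LinearMap.ker
      (Matrix.toLin' ((g : Matrix (Fin n) (Fin n) ℂ)) - LinearMap.id)) = n - 1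

/-!
Let `f` be an irredundant finite family of homogeneous invariants generating the Hilbert ideal, the
ideal generated by the homogeneous invariants of positive degree. Since a reflection moves every
polynomial by a multiple of a linear form, a relation `∑ j, t j * q j = 0` among irredundant
homogeneous invariants forces every `q j` into the Hilbert ideal (Chevalley). Suppose `H` is
weighted homogeneous and `H(f) = 0`. By the chain rule, the partial derivatives `(∂ⱼH)(f)` satisfy
linear relations with coefficients `∂ₖ fⱼ`. Expressed through an irredundant subfamily of the
`(∂ⱼH)(f)`, these relations have coefficients in the Hilbert ideal, and by Euler's identity together
with the irredundance of `f` this is possible only if the subfamily is empty. So `(∂ⱼH)(f) = 0` for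
every `j`, and descending on the degree gives `H = 0`: the `fⱼ` are algebraically independent. They
generate the invariants, because in an expression of an invariant through the `fⱼ` the coefficients
can be replaced by their averages over the group, of lower degree. Integrality of the polynomial
ring over its invariants then makes the `fⱼ` a transcendence basis, which fixes their number.
-/

section Polynomial

open MvPolynomial

variable {ι κ R : Type*}

attribute [local instance] MvPolynomial.gradedAlgebra

section CommSemiring

variable [CommSemiring R] {f : MvPolynomial ι R} {a : ℕ}

lemma homogeneousComponent_mul_of_isHomogeneous (hf : f.IsHomogeneous a) (q : MvPolynomial ι R)
    (d : ℕ) :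
    homogeneousComponent d (f * q) = if a ≤ d then f * homogeneousComponent (d - a) q else 0 := by
  simp only [← decomposition.decompose'_apply]
  exact DirectSum.coe_decompose_mul_of_left_mem (homogeneousSubmodule ι R) d
    ((mem_homogeneousSubmodule a f).2 hf)

lemma mem_of_mul_mem_of_isUnit_constantCoeff {I : Ideal (MvPolynomial ι R)}
    (hI : I.IsHomogeneous (homogeneousSubmodule ι R)) (hf : f.IsHomogeneous a)
    {q : MvPolynomial ι R} (hq : IsUnit (constantCoeff q)) (hfq : f * q ∈ I) : f ∈ I := by
  have hcomp : f * C (constantCoeff q) ∈ I := by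
    have h := homogeneousComponent_mem_of_mem hI hfq a
    rwa [homogeneousComponent_mul_of_isHomogeneous hf, if_pos le_rfl, Nat.sub_self,
      homogeneousComponent_zero] at h
  exact (Ideal.mul_unit_mem_iff_mem I (hq.map C)).1 hcomp

lemma isHomogeneous_aeval {f : κ → MvPolynomial ι R} {d : κ → ℕ}
    (hf : ∀ j, (f j).IsHomogeneous (d j)) {H : MvPolynomial κ R} {e : ℕ}
    (hH : H.IsWeightedHomogeneous d e) : (aeval f H).IsHomogeneous e := by
  induction hH using IsWeightedHomogeneous.induction_on with
  | zero => simpa only [map_zero] using isHomogeneous_zero ι R e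
  | add p q _ _ hp hq => simpa only [map_add] using hp.add hq
  | monomial m r hm =>
    rw [aeval_monomial, ← hm, Finsupp.weight_apply, ← zero_add (m.sum _)]
    exact (isHomogeneous_C ι r).mul
      (IsHomogeneous.prod _ _ _ fun j _ => by
        simpa only [smul_eq_mul, mul_comm] using (hf j).pow (m j))

lemma homogeneousComponent_aeval {f : κ → MvPolynomial ι R} {d : κ → ℕ}
    (hf : ∀ j, (f j).IsHomogeneous (d j)) (H : MvPolynomial κ R) (e : ℕ) :
    homogeneousComponent e (aeval f H) = aeval f (weightedHomogeneousComponent d e H) := by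
  induction H using MvPolynomial.induction_on' with
  | add p q hp hq => simp only [map_add, hp, hq]
  | monomial m r =>
    have hm := isWeightedHomogeneous_monomial d m r rfl
    rw [homogeneousComponent_of_mem (isHomogeneous_aeval hf hm),
      weightedHomogeneousComponent_of_mem hm]
    split_ifs
    · rfl
    · rw [map_zero]

lemma isWeightedHomogeneous_pderiv_sub {d : κ → ℕ} {H : MvPolynomial κ R} {e : ℕ}
    (hH : H.IsWeightedHomogeneous d e) (j : κ) :
    (pderiv j H).IsWeightedHomogeneous d (e - d j) := by
  intro m hm
  rw [coeff_pderiv] at hm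
  have hweight := hH (left_ne_zero_of_mul hm)
  rw [map_add, Finsupp.weight_single, one_smul] at hweight
  omega

end CommSemiring

lemma derivation_aeval [CommSemiring R] [Fintype κ] {A M : Type*} [CommSemiring A] [Algebra R A]
    [AddCommMonoid M] [Module R M] [Module A M] (D : Derivation R A M) (f : κ → A)
    (H : MvPolynomial κ R) : D (aeval f H) = ∑ j, aeval f (pderiv j H) • D (f j) := by
  classical
  induction H using MvPolynomial.induction_on with
  | C r => simp
  | add p q hp hq => simp only [map_add, hp, hq, add_smul, Finset.sum_add_distrib]
  | mul_X p i hp =>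
    have hX : ∑ j, aeval f p • aeval f (pderiv (R := R) j (X i)) • D (f j) =
        aeval f p • D (f i) := by
      rw [Finset.sum_eq_single i (fun j _ hj => by simp [pderiv_X_of_ne hj.symm]) (by simp)]
      simp
    simp only [map_mul, aeval_X, Derivation.leibniz, hp, smul_eq_mul, map_add, add_smul, hX,
      Finset.sum_add_distrib, mul_smul, Finset.smul_sum]

lemma algebraicIndependent_of_aeval_pderiv_eq_zero [CommRing R] [IsAddTorsionFree R] [Finite κ]
    {f : κ → MvPolynomial ι R} {d : κ → ℕ} (hf : ∀ j, (f j).IsHomogeneous (d j))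
    (hd : ∀ j, d j ≠ 0)
    (hrel : ∀ (H : MvPolynomial κ R) (e : ℕ), H.IsWeightedHomogeneous d e → aeval f H = 0 →
      ∀ j, aeval f (pderiv j H) = 0) : AlgebraicIndependent R f := by
  cases nonempty_fintype κ
  have hzero : ∀ (e : ℕ) (H : MvPolynomial κ R), H.IsWeightedHomogeneous d e →
      aeval f H = 0 → H = 0 := by
    intro e
    induction e using Nat.strong_induction_on with
    | _ e ih =>
      intro H hH hHf
      by_cases he : e = 0
      · have hconst : H = C (coeff 0 H) := by
          rw [← weightedHomogeneousComponent_zero H hd, ← he, hH.weightedHomogeneousComponent_same]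
        rw [hconst, aeval_C, algebraMap_eq, C_eq_zero] at hHf
        rw [hconst, hHf, map_zero]
      · have hpderiv : ∀ j, pderiv j H = 0 := fun j =>
          ih (e - d j) (by have := hd j; omega) _ (isWeightedHomogeneous_pderiv_sub hH j)
            (hrel H e hH hHf j)
        have heuler := hH.sum_weight_X_mul_pderiv
        simp only [hpderiv, mul_zero, smul_zero, Finset.sum_const_zero] at heuler
        exact (smul_eq_zero_iff_right he).1 heuler.symm
  refine algebraicIndependent_iff.2 fun H hH => ?_
  rw [← sum_weightedHomogeneousComponent d H]
  refine finsum_eq_zero_of_forall_eq_zero fun e =>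
    hzero e _ (weightedHomogeneousComponent_isWeightedHomogeneous e H) ?_
  rw [← homogeneousComponent_aeval hf, hH, map_zero]

end Polynomial

section Irredundant

/-- A family is irredundant if no member lies in the span of the others: the minimality of a system
of generators of an ideal, where linear independence is too much to ask. -/
def IsIrredundant (R : Type*) {M κ : Type*} [Semiring R] [AddCommMonoid M] [Module R M]
    (v : κ → M) : Prop :=
  ∀ i, v i ∉ Submodule.span R (v '' {i}ᶜ)

lemma exists_finset_isIrredundant {R M : Type*} [Semiring R] [AddCommMonoid M] [Module R M]
    {s : Set M} (hs : (Submodule.span R s).FG) :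
    ∃ t : Finset M, (t : Set M) ⊆ s ∧ Submodule.span R (t : Set M) = Submodule.span R s ∧
      IsIrredundant R (Subtype.val : t → M) := by
  classical
  obtain ⟨u, hus, hu⟩ := (Submodule.fg_span_iff_fg_span_finset_subset s).1 hs
  obtain ⟨t, htu, ht, hmin⟩ := exists_minimal_le_of_wellFoundedLT
    (fun t : Finset M => Submodule.span R (t : Set M) = Submodule.span R s) u hu.symm
  refine ⟨t, (Finset.coe_subset.2 htu).trans hus, ht, fun x hx => ?_⟩
  have himage : Subtype.val '' ({x}ᶜ : Set t) = (t.erase x : Set M) := by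
    ext y
    aesop
  rw [himage] at hx
  have hspan : Submodule.span R (t.erase x : Set M) = Submodule.span R s := by
    rw [← ht, ← Submodule.span_insert_eq_span hx, ← Finset.coe_insert, Finset.insert_erase x.2]
  exact Finset.notMem_erase _ t (hmin hspan (Finset.erase_subset _ _) x.2)

variable {ι κ K : Type*} [Field K]

open MvPolynomial

attribute [local instance] MvPolynomial.gradedAlgebra

variable {f : κ → MvPolynomial ι K} {d : κ → ℕ}

namespace IsIrredundant

lemma constantCoeff_eq_zero [Fintype κ] (hf : ∀ j, (f j).IsHomogeneous (d j))
    (hirr : IsIrredundant (MvPolynomial ι K) f) {q : κ → MvPolynomial ι K}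
    (hq : ∑ j, f j * q j = 0) (i : κ) : constantCoeff (q i) = 0 := by
  classical
  by_contra hi
  have hI : (Ideal.span (f '' {i}ᶜ)).IsHomogeneous (homogeneousSubmodule ι K) :=
    Ideal.homogeneous_span _ _ (by rintro _ ⟨j, -, rfl⟩; exact ⟨d j, hf j⟩)
  refine hirr i (mem_of_mul_mem_of_isUnit_constantCoeff hI (hf i) (isUnit_iff_ne_zero.2 hi) ?_)
  rw [← Finset.add_sum_erase _ _ (Finset.mem_univ i), ← eq_neg_iff_add_eq_zero] at hq
  rw [hq]
  exact neg_mem (sum_mem fun j hj => Ideal.mul_mem_right _ _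
    (Ideal.subset_span ⟨j, Finset.ne_of_mem_erase hj, rfl⟩))

lemma constantCoeff_eq_one [Fintype κ] (hf : ∀ j, (f j).IsHomogeneous (d j))
    (hirr : IsIrredundant (MvPolynomial ι K) f) {q : κ → MvPolynomial ι K} {i : κ}
    (hq : ∑ j, f j * q j = f i) : constantCoeff (q i) = 1 := by
  classical
  have hsyzygy : ∑ j, f j * (q j - Pi.single (M := fun _ => MvPolynomial ι K) i 1 j) = 0 := by
    simp [mul_sub, hq, Pi.single_apply]
  simpa [sub_eq_zero] using hirr.constantCoeff_eq_zero hf hsyzygy i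

lemma constantCoeff_eq_zero_of_sum_mul_pderiv_mem [CharZero K] [Fintype κ] [Finite ι]
    (hf : ∀ j, (f j).IsHomogeneous (d j)) (hd : ∀ j, d j ≠ 0)
    (hirr : IsIrredundant (MvPolynomial ι K) f) {c : κ → MvPolynomial ι K}
    (hc : ∀ k, ∑ j, c j * pderiv k (f j) ∈ Ideal.span (Set.range f)) (j : κ) :
    constantCoeff (c j) = 0 := by
  cases nonempty_fintype ι
  choose b hb using fun k => (Ideal.mem_span_range_iff_exists_fun).1 (hc k)
  have hsyzygy : ∑ j, f j * (d j * c j - ∑ k, X k * b k j) = 0 := by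
    have heuler : ∑ j, f j * (d j * c j) = ∑ k, X k * ∑ j, c j * pderiv k (f j) := by
      simp only [Finset.mul_sum]
      rw [Finset.sum_comm]
      refine Finset.sum_congr rfl fun j _ => ?_
      rw [← mul_assoc, mul_comm (f j), ← nsmul_eq_mul, ← (hf j).sum_X_mul_pderiv, Finset.sum_mul]
      exact Finset.sum_congr rfl fun k _ => by ring
    simp only [mul_sub, Finset.sum_sub_distrib, heuler, ← hb, Finset.mul_sum]
    rw [Finset.sum_comm, sub_eq_zero]
    exact Finset.sum_congr rfl fun j _ => Finset.sum_congr rfl fun k _ => by ring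
  simpa [hd j] using hirr.constantCoeff_eq_zero hf hsyzygy j

end IsIrredundant

end Irredundant

section Invariants

variable {G : Type*} [Group G]

lemma smul_sub_mem_of_closure_eq_top {A : Type*} [Ring A] [MulSemiringAction G A] {S : Set G}
    (hS : Subgroup.closure S = ⊤) {I : Ideal A} (hI : ∀ (g : G), ∀ p ∈ I, g • p ∈ I) {q : A}
    (hq : ∀ g ∈ S, g • q - q ∈ I) (g : G) : g • q - q ∈ I := by
  induction (hS ▸ Subgroup.mem_top g : g ∈ Subgroup.closure S) using Subgroup.closure_induction with
  | mem g hg => exact hq g hg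
  | one => simp
  | mul a b _ _ ha hb =>
    have h := add_mem (hI a _ hb) ha
    rwa [smul_sub, sub_add_sub_cancel, ← mul_smul] at h
  | inv a _ ha =>
    have h := neg_mem (hI a⁻¹ _ ha)
    rwa [smul_sub, inv_smul_smul, neg_sub] at h

section Reynolds

variable (K : Type*) {A : Type*} [CommRing K] [CommRing A] [Algebra K A] [MulSemiringAction G A]
  [SMulCommClass G K A]
  [Fintype G] [Invertible (Fintype.card G : K)]

variable (G A) in
/-- The Reynolds operator `p ↦ |G|⁻¹ ∑ g, g • p`, projecting an algebra onto its invariants. -/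
noncomputable def reynolds : A →ₗ[K] A :=
  (Representation.ofDistribMulAction K G A).averageMap

lemma reynolds_apply (p : A) : reynolds G K A p = ⅟(Fintype.card G : K) • ∑ g : G, g • p := by
  simp [reynolds, GroupAlgebra.average]

lemma reynolds_mem (p : A) : reynolds G K A p ∈ FixedPoints.subalgebra K A G :=
  (Representation.ofDistribMulAction K G A).averageMap_invariant p

lemma reynolds_of_mem {p : A} (hp : p ∈ FixedPoints.subalgebra K A G) : reynolds G K A p = p :=
  (Representation.ofDistribMulAction K G A).averageMap_id p hp

lemma reynolds_mul {a : A} (ha : a ∈ FixedPoints.subalgebra K A G) (p : A) :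
    reynolds G K A (a * p) = a * reynolds G K A p := by
  have hga : ∀ g : G, g • a = a := ha
  simp only [reynolds_apply, smul_mul', hga, ← Finset.mul_sum, mul_smul_comm]

lemma reynolds_sub_mem {I : Ideal A} {p : A} (hp : ∀ g : G, g • p - p ∈ I) :
    reynolds G K A p - p ∈ I := by
  have haverage : reynolds G K A p - p = ⅟(Fintype.card G : K) • ∑ g : G, (g • p - p) := by
    rw [Finset.sum_sub_distrib, smul_sub, reynolds_apply, Finset.sum_const, Finset.card_univ,
      ← Nat.cast_smul_eq_nsmul K, smul_smul, invOf_mul_self, one_smul]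
  rw [haverage, Algebra.smul_def]
  exact I.mul_mem_left _ (sum_mem fun g _ => hp g)

end Reynolds

section Polynomial

open MvPolynomial

variable (G) (ι K : Type*) [Field K] [MulSemiringAction G (MvPolynomial ι K)]

/-- An action on polynomials that preserves degrees, as linear substitutions of the variables do. -/
class PreservesDegree : Prop where
  isHomogeneous_smul (g : G) {p : MvPolynomial ι K} {d : ℕ} (hp : p.IsHomogeneous d) :
    (g • p).IsHomogeneous d

variable {G} in
/-- The effect of a reflection on polynomials: `g` moves each of them by a multiple of one linear
form, whose zero set is the fixed hyperplane. The identity qualifies as well, with `L = 0`. -/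
def ActsAsReflection (g : G) : Prop :=
  ∃ L : MvPolynomial ι K, L.IsHomogeneous 1 ∧ ∀ p : MvPolynomial ι K, L ∣ g • p - p

/-- The Hilbert ideal: the ideal generated by the homogeneous invariants of positive degree. -/
noncomputable def hilbertIdeal [SMulCommClass G K (MvPolynomial ι K)] : Ideal (MvPolynomial ι K) :=
  Ideal.span {p | p ∈ FixedPoints.subalgebra K (MvPolynomial ι K) G ∧ ∃ d ≠ 0, p.IsHomogeneous d}

variable {G ι K}

lemma homogeneousComponent_smul [PreservesDegree G ι K] (g : G) (p : MvPolynomial ι K) (d : ℕ) :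
    homogeneousComponent d (g • p) = g • homogeneousComponent d p := by
  have hcomp (i : ℕ) : homogeneousComponent d (g • homogeneousComponent i p) =
      if d = i then g • homogeneousComponent i p else 0 :=
    homogeneousComponent_of_mem
      (PreservesDegree.isHomogeneous_smul g (homogeneousComponent_isHomogeneous i p))
  conv_lhs => rw [← sum_homogeneousComponent p, Finset.smul_sum, map_sum]
  simp only [hcomp, Finset.sum_ite_eq, Finset.mem_range_succ_iff]
  split_ifs with hd
  · rfl
  · rw [homogeneousComponent_eq_zero _ _ (not_le.1 hd), smul_zero]

lemma totalDegree_smul_le [PreservesDegree G ι K] (g : G) (p : MvPolynomial ι K) :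
    (g • p).totalDegree ≤ p.totalDegree := by
  conv_lhs => rw [← sum_homogeneousComponent p, Finset.smul_sum]
  refine totalDegree_finsetSum_le fun d hd => ?_
  have hhom := PreservesDegree.isHomogeneous_smul g (homogeneousComponent_isHomogeneous d p)
  exact hhom.totalDegree_le.trans (Finset.mem_range_succ_iff.1 hd)

variable [SMulCommClass G K (MvPolynomial ι K)]

lemma smul_mem_hilbertIdeal (g : G) {p : MvPolynomial ι K} (hp : p ∈ hilbertIdeal G ι K) :
    g • p ∈ hilbertIdeal G ι K := by
  induction hp using Submodule.span_induction with
  | mem p hp => exact (hp.1 g).symm ▸ Ideal.subset_span hp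
  | zero => simp
  | add p q _ _ hp hq => exact smul_add g p q ▸ add_mem hp hq
  | smul a p _ hp => exact smul_mul' g a p ▸ Ideal.mul_mem_left _ _ hp

variable [PreservesDegree G ι K]

lemma homogeneousComponent_mem_fixedPoints {p : MvPolynomial ι K}
    (hp : p ∈ FixedPoints.subalgebra K (MvPolynomial ι K) G) (d : ℕ) :
    homogeneousComponent d p ∈ FixedPoints.subalgebra K (MvPolynomial ι K) G := fun g => by
  rw [← homogeneousComponent_smul, hp g]

lemma mem_hilbertIdeal_of_constantCoeff_eq_zero {p : MvPolynomial ι K}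
    (hp : p ∈ FixedPoints.subalgebra K (MvPolynomial ι K) G) (hp0 : constantCoeff p = 0) :
    p ∈ hilbertIdeal G ι K := by
  rw [← sum_homogeneousComponent p]
  refine sum_mem fun d _ => ?_
  by_cases hd : d = 0
  · rw [hd, homogeneousComponent_zero, ← constantCoeff_eq, hp0, map_zero]
    exact zero_mem _
  · exact Ideal.subset_span ⟨homogeneousComponent_mem_fixedPoints hp d, d, hd,
      homogeneousComponent_isHomogeneous d p⟩

section Relation

variable {κ : Type*} [Fintype κ] {f q : κ → MvPolynomial ι K}

lemma ActsAsReflection.exists_relation {s : G} (hs : ActsAsReflection ι K s)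
    (hf : ∀ j, f j ∈ FixedPoints.subalgebra K (MvPolynomial ι K) G) (hq : ∑ j, f j * q j = 0) :
    ∃ (L : MvPolynomial ι K) (r : κ → MvPolynomial ι K), (∀ j, s • q j - q j = L * r j) ∧
      ∑ j, f j * r j = 0 ∧ ∀ j, r j ≠ 0 → (r j).totalDegree < (q j).totalDegree := by
  obtain ⟨L, hL, hdvd⟩ := hs
  by_cases hL0 : L = 0
  · exact ⟨0, 0, fun j => by simpa [hL0] using hdvd (q j), by simp, fun j hj => absurd rfl hj⟩
  choose r hr using fun j => hdvd (q j)
  refine ⟨L, r, hr, ?_, fun j hj => ?_⟩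
  · refine (mul_eq_zero.1 ?_).resolve_left hL0
    have hfs : ∀ j, f j * (s • q j) = s • (f j * q j) := fun j => by rw [smul_mul', hf j s]
    simp only [Finset.mul_sum, mul_left_comm L, ← hr, mul_sub, Finset.sum_sub_distrib, hfs,
      ← Finset.smul_sum, hq, smul_zero, sub_zero]
  · have hdeg : (L * r j).totalDegree = 1 + (r j).totalDegree := by
      rw [totalDegree_mul_of_isDomain hL0 hj, hL.totalDegree hL0]
    have hle : (s • q j - q j).totalDegree ≤ (q j).totalDegree :=
      (totalDegree_sub _ _).trans (max_le (totalDegree_smul_le s _) le_rfl)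
    rw [hr, hdeg] at hle
    omega

/- Induction on the degree of `q i`: modulo the Hilbert ideal, `q i` is fixed by the reflections,
hence congruent to its average, whose constant term vanishes by irredundance. -/
lemma IsIrredundant.mem_hilbertIdeal [CharZero K] [Finite G]
    (hG : Subgroup.closure {g : G | ActsAsReflection ι K g} = ⊤) {d : κ → ℕ}
    (hf : ∀ j, f j ∈ FixedPoints.subalgebra K (MvPolynomial ι K) G)
    (hfd : ∀ j, (f j).IsHomogeneous (d j)) (hirr : IsIrredundant (MvPolynomial ι K) f)
    (hq : ∑ j, f j * q j = 0) (i : κ) : q i ∈ hilbertIdeal G ι K := by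
  cases nonempty_fintype G
  have : Invertible (Fintype.card G : K) := invertibleOfNonzero (by simp)
  induction hn : (q i).totalDegree using Nat.strong_induction_on generalizing q with
  | _ n ih =>
  have hrefl : ∀ s ∈ {g : G | ActsAsReflection ι K g}, s • q i - q i ∈ hilbertIdeal G ι K := by
    intro s hs
    obtain ⟨L, r, hr, hrel, hdeg⟩ := hs.exists_relation hf hq
    rw [hr]
    refine Ideal.mul_mem_left _ _ ?_
    by_cases hri : r i = 0
    · exact hri ▸ zero_mem _
    · exact ih _ (hn ▸ hdeg i hri) hrel rfl
  have haverage : reynolds G K _ (q i) - q i ∈ hilbertIdeal G ι K :=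
    reynolds_sub_mem K
      (smul_sub_mem_of_closure_eq_top hG (fun g _ => smul_mem_hilbertIdeal g) hrefl)
  have hrelation : ∑ j, f j * reynolds G K _ (q j) = 0 := by
    simp only [← reynolds_mul K (hf _), ← map_sum, hq, map_zero]
  have hmem := mem_hilbertIdeal_of_constantCoeff_eq_zero (reynolds_mem K (q i))
    (hirr.constantCoeff_eq_zero hfd hrelation i)
  exact (Submodule.sub_mem_iff_right _ hmem).1 haverage

end Relation

end Polynomial

end Invariants

section Generators

open MvPolynomial

lemma aeval_mem_of_forall_mem {κ R A : Type*} [CommSemiring R] [CommSemiring A] [Algebra R A]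
    {S : Subalgebra R A} {f : κ → A} (hf : ∀ j, f j ∈ S) (P : MvPolynomial κ R) : aeval f P ∈ S :=
  Algebra.adjoin_le (Set.range_subset_iff.2 hf)
    ((Algebra.adjoin_range_eq_range_aeval R f).ge ⟨P, rfl⟩)

lemma nonempty_equiv_of_fixedPoints_eq_adjoin {G ι κ R : Type*} [Group G] [Finite G] [CommRing R]
    [IsDomain R] [MulSemiringAction G (MvPolynomial ι R)] [SMulCommClass G R (MvPolynomial ι R)]
    {f : κ → MvPolynomial ι R} (hf : AlgebraicIndependent R f)
    (hadjoin : FixedPoints.subalgebra R (MvPolynomial ι R) G = Algebra.adjoin R (Set.range f)) :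
    Nonempty (κ ≃ ι) := by
  have : Algebra.IsInvariant (Algebra.adjoin R (Set.range f)) (MvPolynomial ι R) G :=
    ⟨fun p hp => ⟨⟨p, hadjoin.le hp⟩, rfl⟩⟩
  have : Algebra.IsIntegral (Algebra.adjoin R (Set.range f)) (MvPolynomial ι R) :=
    Algebra.IsInvariant.isIntegral _ _ G
  have hbasis : IsTranscendenceBasis R f := hf.isTranscendenceBasis_iff_isAlgebraic.2 inferInstance
  exact Cardinal.lift_mk_eq'.1
    (hbasis.lift_cardinalMk_eq (IsTranscendenceBasis.mvPolynomial ι R))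

variable {G ι κ K : Type*} [Group G] [Finite G] [Field K] [CharZero K]
  [MulSemiringAction G (MvPolynomial ι K)] [SMulCommClass G K (MvPolynomial ι K)]
  [PreservesDegree G ι K] {f : κ → MvPolynomial ι K} {d : κ → ℕ}

lemma IsIrredundant.aeval_pderiv_eq_zero [Finite ι] [Finite κ]
    (hG : Subgroup.closure {g : G | ActsAsReflection ι K g} = ⊤)
    (hf : ∀ j, f j ∈ FixedPoints.subalgebra K (MvPolynomial ι K) G)
    (hfd : ∀ j, (f j).IsHomogeneous (d j)) (hd : ∀ j, d j ≠ 0)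
    (hirr : IsIrredundant (MvPolynomial ι K) f)
    (hspan : hilbertIdeal G ι K ≤ Ideal.span (Set.range f)) {H : MvPolynomial κ K} {e : ℕ}
    (hH : H.IsWeightedHomogeneous d e) (hHf : aeval f H = 0) (j : κ) :
    aeval f (pderiv j H) = 0 := by
  cases nonempty_fintype κ
  obtain ⟨t, ht, htspan, htirr⟩ :=
    exists_finset_isIrredundant (R := MvPolynomial ι K) (IsNoetherian.noetherian
      (Ideal.span (Set.range fun j => aeval f (pderiv j H))))
  choose jt hjt using fun x : t => ht x.2
  have hdeg : ∀ x : t, (x : MvPolynomial ι K).IsHomogeneous (e - d (jt x)) := fun x =>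
    hjt x ▸ isHomogeneous_aeval hfd (isWeightedHomogeneous_pderiv_sub hH _)
  have hinv : ∀ x : t, (x : MvPolynomial ι K) ∈ FixedPoints.subalgebra K (MvPolynomial ι K) G :=
    fun x => hjt x ▸ aeval_mem_of_forall_mem hf _
  have hmem : ∀ j, aeval f (pderiv j H) ∈ Ideal.span (Set.range (Subtype.val : t → _)) := by
    intro j
    rw [Subtype.range_coe]
    exact htspan.ge (Submodule.subset_span (by simp))
  choose c hc using fun j => Ideal.mem_span_range_iff_exists_fun.1 (hmem j)
  have hchain : ∀ k, ∑ x : t, (x : MvPolynomial ι K) * ∑ j, c j x * pderiv k (f j) = 0 := by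
    intro k
    have h := derivation_aeval (pderiv k) f H
    simp only [hHf, map_zero, ← hc, smul_eq_mul, Finset.sum_mul] at h
    rw [h, Finset.sum_comm]
    exact Finset.sum_congr rfl fun x _ => by
      rw [Finset.mul_sum]
      exact Finset.sum_congr rfl fun j _ => by ring
  have hcoeff : ∀ x j, constantCoeff (c j x) = 0 := fun x =>
    hirr.constantCoeff_eq_zero_of_sum_mul_pderiv_mem hfd hd fun k =>
      hspan (htirr.mem_hilbertIdeal hG hinv hdeg (hchain k) x)
  have : IsEmpty t := ⟨fun x => one_ne_zero <| by
    rw [← htirr.constantCoeff_eq_one hdeg (q := c (jt x)) (i := x)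
      (by simpa only [mul_comm] using (hc (jt x)).trans (hjt x))]
    exact hcoeff _ _⟩
  rw [← hc j, Fintype.sum_empty]

lemma fixedPoints_eq_adjoin_of_hilbertIdeal_le [Finite κ]
    (hf : ∀ j, f j ∈ FixedPoints.subalgebra K (MvPolynomial ι K) G)
    (hfd : ∀ j, (f j).IsHomogeneous (d j)) (hd : ∀ j, d j ≠ 0)
    (hspan : hilbertIdeal G ι K ≤ Ideal.span (Set.range f)) :
    FixedPoints.subalgebra K (MvPolynomial ι K) G = Algebra.adjoin K (Set.range f) := by
  cases nonempty_fintype κ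
  cases nonempty_fintype G
  have : Invertible (Fintype.card G : K) := invertibleOfNonzero (by simp)
  refine le_antisymm (fun p hp => ?_) (Algebra.adjoin_le (Set.range_subset_iff.2 hf))
  suffices hhom : ∀ n, ∀ q ∈ FixedPoints.subalgebra K (MvPolynomial ι K) G, q.IsHomogeneous n →
      q ∈ Algebra.adjoin K (Set.range f) by
    rw [← sum_homogeneousComponent p]
    exact sum_mem fun n _ => hhom n _ (homogeneousComponent_mem_fixedPoints hp n)
      (homogeneousComponent_isHomogeneous n p)
  intro n
  induction n using Nat.strong_induction_on with
  | _ n ih =>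
  intro q hq hqn
  by_cases hn : n = 0
  · rw [← homogeneousComponent_eq_self hqn, hn, homogeneousComponent_zero]
    exact Subalgebra.algebraMap_mem _ _
  obtain ⟨c, hc⟩ := Ideal.mem_span_range_iff_exists_fun.1
    (hspan (Ideal.subset_span ⟨hq, n, hn, hqn⟩))
  have hqr : q = ∑ j, f j * reynolds G K _ (c j) := by
    rw [← reynolds_of_mem K hq, ← hc, map_sum]
    exact Finset.sum_congr rfl fun j _ => by rw [mul_comm, reynolds_mul K (hf j)]
  rw [← homogeneousComponent_eq_self hqn, hqr, map_sum]
  refine sum_mem fun j _ => ?_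
  rw [homogeneousComponent_mul_of_isHomogeneous (hfd j)]
  split_ifs with hj
  · exact mul_mem (Algebra.subset_adjoin ⟨j, rfl⟩) (ih _ (by have := hd j; omega) _
      (homogeneousComponent_mem_fixedPoints (reynolds_mem K _) _)
      (homogeneousComponent_isHomogeneous _ _))
  · exact zero_mem _

theorem exists_algebraicIndependent_fixedPoints_eq_adjoin [Finite ι]
    (hG : Subgroup.closure {g : G | ActsAsReflection ι K g} = ⊤) :
    ∃ (f : ι → MvPolynomial ι K) (d : ι → ℕ), (∀ i, (f i).IsHomogeneous (d i)) ∧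
      AlgebraicIndependent K f ∧
      FixedPoints.subalgebra K (MvPolynomial ι K) G = Algebra.adjoin K (Set.range f) := by
  obtain ⟨t, ht, hspan, hirr⟩ :=
    exists_finset_isIrredundant (IsNoetherian.noetherian (hilbertIdeal G ι K))
  have hinv (p : t) : (p : MvPolynomial ι K) ∈ FixedPoints.subalgebra K (MvPolynomial ι K) G :=
    (ht p.2).1
  choose d hd hhom using fun p : t => (ht p.2).2
  have hgen : hilbertIdeal G ι K ≤ Ideal.span (Set.range (Subtype.val : t → MvPolynomial ι K)) := by
    rw [Subtype.range_coe]
    exact hspan.ge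
  have hind : AlgebraicIndependent K (Subtype.val : t → MvPolynomial ι K) :=
    algebraicIndependent_of_aeval_pderiv_eq_zero hhom hd fun H e hH hHt =>
      hirr.aeval_pderiv_eq_zero hG hinv hhom hd hgen hH hHt
  have hadjoin := fixedPoints_eq_adjoin_of_hilbertIdeal_le hinv hhom hd hgen
  obtain ⟨φ⟩ := nonempty_equiv_of_fixedPoints_eq_adjoin hind hadjoin
  refine ⟨Subtype.val ∘ φ.symm, d ∘ φ.symm, fun i => hhom _, hind.comp _ φ.symm.injective, ?_⟩
  rw [hadjoin, φ.symm.surjective.range_comp]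

end Generators

section LinearSubstitution

open MvPolynomial

lemma dvd_algHom_sub_self {ι R : Type*} [CommRing R] {φ : MvPolynomial ι R →ₐ[R] MvPolynomial ι R}
    {L : MvPolynomial ι R} (hL : ∀ i, L ∣ φ (X i) - X i) (p : MvPolynomial ι R) : L ∣ φ p - p := by
  have hquot : (Ideal.Quotient.mkₐ R (Ideal.span {L})).comp φ = Ideal.Quotient.mkₐ R _ := by
    ext1 i
    exact Ideal.Quotient.eq.2 (Ideal.mem_span_singleton.2 (hL i))
  exact Ideal.mem_span_singleton.1 (Ideal.Quotient.eq.1 congr($hquot p))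

lemma exists_eq_vecMulVec_of_rank_le_one {m n K : Type*} [Fintype n] [Field K] {A : Matrix m n K}
    (hA : A.rank ≤ 1) : ∃ v w, A = Matrix.vecMulVec v w := by
  classical
  obtain ⟨⟨v, hv⟩, hspan⟩ := finrank_le_one_iff.1 hA
  choose w hw using fun j => hspan ⟨_, LinearMap.mem_range_self A.mulVecLin (Pi.single j 1)⟩
  refine ⟨v, w, Matrix.ext fun i j => ?_⟩
  have h := congrFun (congrArg Subtype.val (hw j)) i
  simpa [Matrix.vecMulVec, mul_comm] using h.symm

lemma IsPseudoReflection.rank_sub_one_le_one {n : ℕ} {g : GL (Fin n) ℂ}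
    (hg : IsPseudoReflection n g) : ((g : Matrix (Fin n) (Fin n) ℂ) - 1).rank ≤ 1 := by
  have h := LinearMap.finrank_range_add_finrank_ker
    (Matrix.toLin' (g : Matrix (Fin n) (Fin n) ℂ) - LinearMap.id)
  rw [hg.2, ← Matrix.toLin'_one, ← map_sub, finrank_fin_fun, Matrix.toLin'_apply'] at h
  rw [Matrix.rank]
  omega

variable {ι R : Type*} [Fintype ι] [DecidableEq ι] [CommRing R]

/-- The substitution `(g · p)(v) = p(g⁻¹ v)` on polynomials in any finite set of variables, over any
commutative ring; see `polySubst`. -/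
noncomputable def linearSubst (g : GL ι R) : MvPolynomial ι R →ₐ[R] MvPolynomial ι R :=
  aeval fun i => ∑ j, C ((g⁻¹ : GL ι R) i j) * X j

lemma linearSubst_X (g : GL ι R) (i : ι) :
    linearSubst g (X i) = ∑ j, C ((g⁻¹ : GL ι R) i j) * X j :=
  aeval_X _ i

lemma linearSubst_one : linearSubst (1 : GL ι R) = AlgHom.id R _ := by
  ext1 i
  simp [linearSubst_X, Matrix.one_apply]

lemma linearSubst_mul (g h : GL ι R) :
    linearSubst (g * h) = (linearSubst g).comp (linearSubst h) := by
  ext1 i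
  simp only [AlgHom.comp_apply, linearSubst_X, map_sum, map_mul, algHom_C, algebraMap_eq,
    mul_inv_rev, Units.val_mul, Matrix.mul_apply, Finset.mul_sum, Finset.sum_mul]
  rw [Finset.sum_comm]
  simp only [mul_assoc]

lemma isHomogeneous_linearSubst (g : GL ι R) {p : MvPolynomial ι R} {d : ℕ}
    (hp : p.IsHomogeneous d) : (linearSubst g p).IsHomogeneous d := by
  have h := hp.aeval (n := 1) (fun i => ∑ j, C ((g⁻¹ : GL ι R) i j) * X j)
    fun i => IsHomogeneous.sum _ _ _ fun j _ => isHomogeneous_C_mul_X _ _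
  rwa [one_mul] at h

lemma exists_isHomogeneous_one_dvd_linearSubst_sub_self {K : Type*} [Field K] {g : GL ι K}
    (hg : ((g : Matrix ι ι K) - 1).rank ≤ 1) :
    ∃ L : MvPolynomial ι K, L.IsHomogeneous 1 ∧ ∀ p, L ∣ linearSubst g p - p := by
  obtain ⟨v, w, hvw⟩ := exists_eq_vecMulVec_of_rank_le_one hg
  set u := ((g⁻¹ : GL ι K) : Matrix ι ι K).mulVec v
  have hinv : ((g⁻¹ : GL ι K) : Matrix ι ι K) = 1 - Matrix.vecMulVec u w := by
    rw [← Matrix.mul_vecMulVec, ← hvw, mul_sub, Units.inv_mul, mul_one, sub_sub_cancel]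
  refine ⟨∑ j, C (w j) * X j, IsHomogeneous.sum _ _ _ fun j _ => isHomogeneous_C_mul_X _ _,
    dvd_algHom_sub_self fun i => ⟨-C (u i), ?_⟩⟩
  have hone : ∑ j, C ((1 : Matrix ι ι K) i j) * X j = (X i : MvPolynomial ι K) := by
    simp [Matrix.one_apply]
  simp only [linearSubst_X, hinv, Matrix.sub_apply, Matrix.vecMulVec_apply, map_sub, map_mul,
    sub_mul, Finset.sum_sub_distrib, hone, mul_assoc, ← Finset.mul_sum]
  ring

/-- The action of `GL ι R` on polynomials by `linearSubst`. -/
noncomputable abbrev linearSubstAction : MulSemiringAction (GL ι R) (MvPolynomial ι R) where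
  smul g p := linearSubst g p
  one_smul p := congr($linearSubst_one p)
  mul_smul g h p := congr($(linearSubst_mul g h) p)
  smul_zero g := map_zero (linearSubst g)
  smul_add g := map_add (linearSubst g)
  smul_one g := map_one (linearSubst g)
  smul_mul g := map_mul (linearSubst g)

end LinearSubstitution

theorem statement10_general {ι K : Type*} [Fintype ι] [DecidableEq ι] [Field K] [CharZero K]
    (W : Subgroup (GL ι K)) [Finite W]
    (hgen : W ≤ Subgroup.closure {g : GL ι K | g ∈ W ∧ ((g : Matrix ι ι K) - 1).rank ≤ 1}) :
    ∃ σ : ι → MvPolynomial ι K,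
      (∃ d : ι → ℕ, ∀ i, (σ i).IsHomogeneous (d i)) ∧
      AlgebraicIndependent K σ ∧
      {p : MvPolynomial ι K | ∀ g ∈ W, linearSubst g p = p}
        = (Algebra.adjoin K (Set.range σ) : Set (MvPolynomial ι K)) := by
  let : MulSemiringAction (GL ι K) (MvPolynomial ι K) := linearSubstAction
  have : SMulCommClass W K (MvPolynomial ι K) := ⟨fun g r p => map_smul (linearSubst g.1) r p⟩
  have : PreservesDegree W ι K := ⟨fun g _ _ hp => isHomogeneous_linearSubst g.1 hp⟩
  have hG : Subgroup.closure {g : W | ActsAsReflection ι K g} = ⊤ := by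
    rw [eq_top_iff, ← Subgroup.map_le_map_iff_of_injective W.subtype_injective,
      MonoidHom.map_closure, ← MonoidHom.range_eq_map, W.range_subtype]
    exact hgen.trans (Subgroup.closure_mono fun g hg =>
      ⟨⟨g, hg.1⟩, exists_isHomogeneous_one_dvd_linearSubst_sub_self hg.2, rfl⟩)
  obtain ⟨σ, d, hσ, hind, hadjoin⟩ := exists_algebraicIndependent_fixedPoints_eq_adjoin hG
  refine ⟨σ, ⟨d, hσ⟩, hind, ?_⟩
  rw [← hadjoin]
  exact Set.ext fun p => ⟨fun hp g => hp g g.2, fun hp g hg => hp ⟨g, hg⟩⟩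

/-- The invariant ring of a finite pseudo-reflection group is a
polynomial algebra on `n` algebraically independent homogeneous generators. -/
theorem statement10 (n : ℕ) (W : Subgroup (GL (Fin n) ℂ))
    (hfin : (W : Set (GL (Fin n) ℂ)).Finite)
    (hgen : W = Subgroup.closure {g : GL (Fin n) ℂ | g ∈ W ∧ IsPseudoReflection n g}) :
    ∃ σ : Fin n → MvPolynomial (Fin n) ℂ,
      (∃ d : Fin n → ℕ, ∀ i, (σ i).IsHomogeneous (d i)) ∧
      AlgebraicIndependent ℂ σ ∧
      {p : MvPolynomial (Fin n) ℂ | ∀ g ∈ W, polySubst n g p = p}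
        = (Algebra.adjoin ℂ (Set.range σ) : Set (MvPolynomial (Fin n) ℂ)) :=
  have : Finite W := hfin
  statement10_general W (hgen.le.trans (Subgroup.closure_mono fun _ hg =>
    ⟨hg.1, hg.2.rank_sub_one_le_one⟩))
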